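/- arXiv:1311.5626 — 3 statements merged into one kernel-verified Lean document; each statement's English description precedes it below -/
import Mathlib

section
/- For every n≥1, Z_n(n−1) = C_{n−1}, i.e. the number of elements of 𝔗_n of maximal weight n−1 equals the (n−1)-st Catalan number. -/
/-- The set 𝔗ₙ, encoded as lists of pairs `(i_j, k_j)`:
entries satisfy `1 ≤ i_j - k_j` (i.e. `k_j < i_j`) and `i_j ≤ n-1` (i.e. `i_j + 1 ≤ n`),
the `i_j` are strictly increasing, and the `i_j - k_j` are strictly increasing. -/
def IsTT (n : ℕ) (l : List (ℕ × ℕ)) : Prop :=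
  (∀ p ∈ l, p.2 < p.1 ∧ p.1 + 1 ≤ n) ∧
  List.Chain' (· < ·) (l.map Prod.fst) ∧
  List.Chain' (· < ·) (l.map (fun p => p.1 - p.2))

/-- The set of integers covered by the intervals `[i_j - k_j, i_j]`. -/
def cov (l : List (ℕ × ℕ)) : Finset ℕ :=
  l.foldr (fun p s => Finset.Icc (p.1 - p.2) p.1 ∪ s) ∅

/-- The weight of an element of 𝔗ₙ. -/
def wt (l : List (ℕ × ℕ)) : ℕ := (cov l).card

/-- `Z n m` is the number of elements of 𝔗ₙ of weight `m`. -/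
noncomputable def Z (n m : ℕ) : ℕ :=
  Nat.card {l : List (ℕ × ℕ) // IsTT n l ∧ wt l = m}

/-!
Read an element of `𝔗_{N+1}` as a list of intervals `[a_j, b_j]` with both endpoints increasing.
It has weight `N` exactly when the intervals leave no gap in `[1, N]`, that is, `a_1 = 1`,
`b_p = N` and `a_{j+1} ≤ b_j + 1`. These are the conditions under which there is a Dyck path of
semilength `N` whose `j`-th peak comes after `a_j - 1` down steps and `b_j` up steps, and a Dyck
path is determined by its peaks.
-/

open DyckStep

lemma replicate_append_cons_inj {α : Type*} {a b c : α} {m n : ℕ} {s t : List α} (hb : b ≠ a)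
    (hc : c ≠ a) :
    List.replicate m a ++ b :: s = List.replicate n a ++ c :: t ↔ m = n ∧ b = c ∧ s = t := by
  induction m generalizing n with
  | zero => cases n <;> simp [List.replicate_succ, hb]
  | succ m ih => cases n <;> simp [List.replicate_succ, hc.symm, ih]

section Cover

variable {N d u : ℕ} {l : List (ℕ × ℕ)}

/-- The lists of intervals `[p.1 - p.2, p.1]` whose left endpoints increase strictly from above `d`
and whose right endpoints increase strictly from above `u` to `N`, leaving no gap in `[u + 1, N]`.
For `d = u = 0` these are the elements of `𝔗_{N+1}` of weight `N`. -/
def IsCover (N : ℕ) : ℕ → ℕ → List (ℕ × ℕ) → Prop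
  | _, u, [] => u = N
  | d, u, p :: l =>
    d < p.1 - p.2 ∧ p.1 - p.2 ≤ u + 1 ∧ u < p.1 ∧ IsCover N (p.1 - p.2) p.1 l

lemma IsCover.le (h : IsCover N d u l) : u ≤ N := by
  induction l generalizing d u with
  | nil => exact h.le
  | cons p l ih => exact h.2.2.1.le.trans (ih h.2.2.2)

lemma IsCover.of_le {d' : ℕ} (h : IsCover N d' u l) (hd : d ≤ d') : IsCover N d u l := by
  cases l with
  | nil => exact h
  | cons p l => exact ⟨hd.trans_lt h.1, h.2⟩

lemma IsCover.succ_left_or_exists_cons (h : IsCover N d u l) :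
    IsCover N (d + 1) u l ∨ ∃ p m, l = p :: m ∧ p.1 - p.2 = d + 1 := by
  cases l with
  | nil => exact Or.inl h
  | cons p l =>
    rcases (Nat.succ_le_of_lt h.1).eq_or_lt with hp | hp
    · exact Or.inr ⟨p, l, rfl, hp.symm⟩
    · exact Or.inl ⟨hp, h.2⟩

lemma mem_cov {x : ℕ} : x ∈ cov l ↔ ∃ p ∈ l, p.1 - p.2 ≤ x ∧ x ≤ p.1 := by
  induction l with
  | nil => simp [cov]
  | cons p l ih =>
    rw [List.exists_mem_cons_iff, ← ih, ← Finset.mem_Icc, ← Finset.mem_union]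
    rfl

lemma lt_of_mem_cov {a x : ℕ} (hl : (a :: l.map fun p => p.1 - p.2).IsChain (· < ·))
    (hx : x ∈ cov l) : a < x := by
  obtain ⟨p, hp, hpx, -⟩ := mem_cov.1 hx
  exact (hl.rel_cons (List.mem_map_of_mem hp)).trans_le hpx

lemma Ioc_subset_cov_cons_iff {p : ℕ × ℕ} (hu : u < p.1) (hN : p.1 ≤ N)
    (hl : ((p.1 - p.2) :: l.map fun p => p.1 - p.2).IsChain (· < ·)) :
    Finset.Ioc u N ⊆ cov (p :: l) ↔ p.1 - p.2 ≤ u + 1 ∧ Finset.Ioc p.1 N ⊆ cov l := by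
  have cov_cons : cov (p :: l) = Finset.Icc (p.1 - p.2) p.1 ∪ cov l := rfl
  simp only [cov_cons, Finset.subset_iff, Finset.mem_union, Finset.mem_Icc, Finset.mem_Ioc]
  constructor
  · refine fun h => ⟨?_, fun x hx => (h ⟨hu.trans hx.1, hx.2⟩).resolve_left (by omega)⟩
    rcases h (x := u + 1) (by omega) with h | h
    · exact h.1
    · exact (lt_of_mem_cov hl h).le
  · rintro ⟨ha, h⟩ x hx
    by_cases hxp : x ≤ p.1
    · exact Or.inl ⟨by omega, hxp⟩
    · exact Or.inr (h ⟨by omega, hx.2⟩)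

lemma isCover_iff :
    IsCover N d u l ↔ (d :: l.map fun p => p.1 - p.2).IsChain (· < ·) ∧
      (u :: l.map Prod.fst).IsChain (· < ·) ∧ (∀ p ∈ l, p.1 ≤ N) ∧ u ≤ N ∧
      Finset.Ioc u N ⊆ cov l := by
  induction l generalizing d u with
  | nil =>
    rw [IsCover, le_antisymm_iff]
    simp [cov]
  | cons p l ih =>
    simp only [IsCover, ih, List.map_cons, List.isChain_cons_cons, List.forall_mem_cons]
    constructor
    · rintro ⟨hd, ha, hu, hleft, hright, hl, hN, hcov⟩
      exact ⟨⟨hd, hleft⟩, ⟨hu, hright⟩, ⟨hN, hl⟩, hu.le.trans hN,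
        (Ioc_subset_cov_cons_iff hu hN hleft).2 ⟨ha, hcov⟩⟩
    · rintro ⟨⟨hd, hleft⟩, ⟨hu, hright⟩, ⟨hN, hl⟩, -, hcov⟩
      obtain ⟨ha, hcov⟩ := (Ioc_subset_cov_cons_iff hu hN hleft).1 hcov
      exact ⟨hd, ha, hu, hleft, hright, hl, hN, hcov⟩

lemma wt_eq_iff_Ioc_subset_cov (h : ∀ p ∈ l, p.2 < p.1 ∧ p.1 ≤ N) :
    wt l = N ↔ Finset.Ioc 0 N ⊆ cov l := by
  have hsub : cov l ⊆ Finset.Ioc 0 N := by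
    intro x hx
    obtain ⟨p, hp, hpx, hxp⟩ := mem_cov.1 hx
    have := h p hp
    exact Finset.mem_Ioc.2 ⟨by omega, by omega⟩
  constructor
  · intro hw
    exact (Finset.eq_of_subset_of_card_le hsub (by simpa [wt] using hw.ge)).ge
  · intro hcov
    simp [wt, hsub.antisymm hcov]

lemma isTT_and_wt_eq_iff_isCover : IsTT (N + 1) l ∧ wt l = N ↔ IsCover N 0 0 l := by
  have isChain_zero_cons {m : List ℕ} :
      (0 :: m).IsChain (· < ·) ↔ (∀ x ∈ m, 0 < x) ∧ m.IsChain (· < ·) := by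
    simp only [List.isChain_iff_pairwise, List.pairwise_cons]
  simp only [isCover_iff, isChain_zero_cons, List.forall_mem_map, N.zero_le, true_and]
  constructor
  · rintro ⟨⟨hl, hright, hleft⟩, hw⟩
    have hl' : ∀ p ∈ l, p.2 < p.1 ∧ p.1 ≤ N := by simpa using hl
    exact ⟨⟨fun p hp => Nat.sub_pos_of_lt (hl' p hp).1, hleft⟩,
      ⟨fun p hp => Nat.zero_lt_of_lt (hl' p hp).1, hright⟩, fun p hp => (hl' p hp).2,
      (wt_eq_iff_Ioc_subset_cov hl').1 hw⟩
  · rintro ⟨⟨hpos, hleft⟩, ⟨-, hright⟩, hN, hcov⟩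
    have hl : ∀ p ∈ l, p.2 < p.1 ∧ p.1 ≤ N :=
      fun p hp => ⟨Nat.lt_of_sub_pos (hpos p hp), hN p hp⟩
    exact ⟨⟨by simpa using hl, hright, hleft⟩, (wt_eq_iff_Ioc_subset_cov hl).2 hcov⟩

end Cover

section DyckSuffix

variable {N d u : ℕ} {w : List DyckStep}

/-- The lists of steps that complete a prefix with `d` down steps and `u` up steps to a Dyck path
of semilength `N`; the recursive form lets paths be treated one step at a time. -/
def IsDyckSuffix (N : ℕ) : ℕ → ℕ → List DyckStep → Prop
  | d, u, [] => d = N ∧ u = N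
  | d, u, U :: w => IsDyckSuffix N d (u + 1) w
  | d, u, D :: w => d < u ∧ IsDyckSuffix N (d + 1) u w

lemma isDyckSuffix_replicate_U_append {k : ℕ} :
    IsDyckSuffix N d u (List.replicate k U ++ w) ↔ IsDyckSuffix N d (u + k) w := by
  induction k generalizing u with
  | zero => rfl
  | succ k ih =>
    rw [List.replicate_succ, List.cons_append, IsDyckSuffix, ih, add_right_comm, add_assoc]

lemma isDyckSuffix_replicate_D_append {k : ℕ} (h : d + k ≤ u) :
    IsDyckSuffix N d u (List.replicate k D ++ w) ↔ IsDyckSuffix N (d + k) u w := by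
  induction k generalizing d with
  | zero => rfl
  | succ k ih =>
    rw [List.replicate_succ, List.cons_append, IsDyckSuffix, ih (by omega),
      and_iff_right (by omega), add_right_comm, add_assoc]

lemma isDyckSuffix_iff_count (hdu : d ≤ u) :
    IsDyckSuffix N d u w ↔ d + w.count D = N ∧ u + w.count U = N ∧
      ∀ i, d + (w.take i).count D ≤ u + (w.take i).count U := by
  induction w generalizing d u with
  | nil => simp [IsDyckSuffix, hdu]
  | cons s w ih =>
    rw [← Nat.and_forall_add_one]
    cases s with
    | U =>
      rw [IsDyckSuffix, ih (hdu.trans u.le_succ)]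
      simp [hdu, ← add_assoc, add_right_comm u]
    | D =>
      rw [IsDyckSuffix, and_congr_right fun hlt => ih (Nat.succ_le_of_lt hlt)]
      simp only [Nat.succ_eq_add_one, add_right_comm d, Order.add_one_le_iff, List.count_cons_self,
        ← add_assoc, ne_eq, reduceCtorEq, not_false_eq_true, List.count_cons_of_ne, List.take_zero,
        List.count_nil, add_zero, hdu, List.take_succ_cons, true_and, and_iff_right_iff_imp,
        and_imp]
      exact fun _ _ h => by simpa using h 0

lemma bijOn_toList_isDyckSuffix (N : ℕ) :
    Set.BijOn DyckWord.toList {p | p.semilength = N} {w | IsDyckSuffix N 0 0 w} := by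
  refine ⟨fun p hp => ?_, fun p _ q _ => DyckWord.ext, fun w hw => ?_⟩
  · exact (isDyckSuffix_iff_count le_rfl).2 ⟨by rw [zero_add, ← p.semilength_eq_count_D, hp],
      by rw [zero_add]; exact hp, by simpa using p.count_D_le_count_U⟩
  · obtain ⟨hD, hU, hle⟩ := (isDyckSuffix_iff_count le_rfl).1 hw
    rw [zero_add] at hD hU
    exact ⟨⟨w, hU.trans hD.symm, by simpa using hle⟩, hU, rfl⟩

end DyckSuffix

section DyckPath

variable {N d u : ℕ} {l : List (ℕ × ℕ)}

/-- The steps still to be made after `d` down steps and `u` up steps by the path of semilength `N`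
in which each `p ∈ l` stands for a peak after `p.1 - p.2 - 1` down steps and `p.1` up steps. -/
def dyckPath (N : ℕ) : ℕ → ℕ → List (ℕ × ℕ) → List DyckStep
  | d, _, [] => List.replicate (N - d) D
  | d, u, p :: l => List.replicate (p.1 - p.2 - (d + 1)) D ++
      (List.replicate (p.1 - u) U ++ D :: dyckPath N (p.1 - p.2) p.1 l)

lemma dyckPath_cons_of_lt {p : ℕ × ℕ} (hu : u < p.1) :
    dyckPath N d u (p :: l) = List.replicate (p.1 - p.2 - (d + 1)) D ++
      U :: (List.replicate (p.1 - (u + 1)) U ++ D :: dyckPath N (p.1 - p.2) p.1 l) := by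
  rw [dyckPath, show p.1 - u = p.1 - (u + 1) + 1 by omega, List.replicate_succ, List.cons_append]

lemma dyckPath_nil_ne_cons {p : ℕ × ℕ} (hu : u < p.1) :
    dyckPath N d u [] ≠ dyckPath N d u (p :: l) := by
  intro he
  have hU : U ∈ dyckPath N d u [] := by simp [he, dyckPath_cons_of_lt hu]
  simpa using List.eq_of_mem_replicate hU

lemma dyckPath_cons_eq_U_cons {p : ℕ × ℕ} (hp : p.1 - p.2 = d + 1) (hu : u < p.1) :
    dyckPath N d u (p :: l) = U :: dyckPath N d (u + 1) (p :: l) := by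
  rw [dyckPath_cons_of_lt hu, dyckPath, hp, Nat.sub_self, List.replicate_zero, List.nil_append,
    List.nil_append]

lemma IsCover.dyckPath_eq_D_cons (h : IsCover N (d + 1) u l) (hd : d < N) :
    dyckPath N d u l = D :: dyckPath N (d + 1) u l := by
  cases l with
  | nil => rw [dyckPath, dyckPath, ← List.replicate_succ, show N - d = N - (d + 1) + 1 by omega]
  | cons p l =>
    have hp := h.1
    rw [dyckPath, dyckPath, show p.1 - p.2 - (d + 1) = p.1 - p.2 - (d + 1 + 1) + 1 by omega,
      List.replicate_succ, List.cons_append]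

lemma IsCover.isDyckSuffix_dyckPath (hdu : d ≤ u) (h : IsCover N d u l) :
    IsDyckSuffix N d u (dyckPath N d u l) := by
  induction l generalizing d u with
  | nil =>
    obtain rfl : u = N := h
    rw [dyckPath, ← List.append_nil (List.replicate _ _),
      isDyckSuffix_replicate_D_append (by omega)]
    exact ⟨by omega, rfl⟩
  | cons p l ih =>
    obtain ⟨hd, ha, hu, hl⟩ := h
    rw [dyckPath, isDyckSuffix_replicate_D_append (by omega), isDyckSuffix_replicate_U_append,
      show d + (p.1 - p.2 - (d + 1)) = p.1 - p.2 - 1 by omega, Nat.add_sub_cancel' hu.le,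
      IsDyckSuffix, Nat.sub_add_cancel (by omega)]
    exact ⟨by omega, ih (by omega) hl⟩

lemma injOn_dyckPath : Set.InjOn (dyckPath N d u) {l | IsCover N d u l} := by
  intro l hl m hm he
  induction l generalizing d u m with
  | nil =>
    cases m with
    | nil => rfl
    | cons q m => exact absurd he (dyckPath_nil_ne_cons hm.2.2.1)
  | cons p l ih =>
    cases m with
    | nil => exact absurd he.symm (dyckPath_nil_ne_cons hl.2.2.1)
    | cons q m =>
      obtain ⟨hpd, hpa, hpu, hl⟩ := hl
      obtain ⟨hqd, hqa, hqu, hm⟩ := hm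
      rw [dyckPath_cons_of_lt hpu, dyckPath_cons_of_lt hqu,
        replicate_append_cons_inj (by decide) (by decide),
        replicate_append_cons_inj (by decide) (by decide)] at he
      obtain ⟨hD, -, hU, -, he⟩ := he
      obtain rfl : p = q := Prod.ext (by omega) (by omega)
      rw [ih hl hm he]

lemma surjOn_dyckPath (hdu : d ≤ u) :
    Set.SurjOn (dyckPath N d u) {l | IsCover N d u l} {w | IsDyckSuffix N d u w} := by
  intro w hw
  induction w generalizing d u with
  | nil =>
    obtain ⟨rfl, rfl⟩ := hw
    exact ⟨[], rfl, by simp [dyckPath]⟩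
  | cons s w ih =>
    cases s with
    | D =>
      obtain ⟨hlt, hw⟩ := hw
      obtain ⟨l, hl, rfl⟩ := ih hlt hw
      exact ⟨l, hl.of_le d.le_succ, hl.dyckPath_eq_D_cons (hlt.trans_le hl.le)⟩
    | U =>
      -- The path `w` starts with a down step, so that the new up step creates the peak
      -- `[d + 1, u + 1]`, or it starts by climbing to its first peak, which
      -- absorbs the new up step.
      obtain ⟨l, hl, rfl⟩ := ih (hdu.trans u.le_succ) hw
      obtain hl' | ⟨p, m, rfl, hp⟩ := hl.succ_left_or_exists_cons
      · have ha : u + 1 - (u - d) = d + 1 := by omega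
        have hcover : IsCover N d u ((u + 1, u - d) :: l) := by
          simp only [IsCover, ha]
          exact ⟨d.lt_succ_self, Nat.succ_le_succ hdu, u.lt_succ_self, hl'⟩
        refine ⟨(u + 1, u - d) :: l, hcover, ?_⟩
        rw [hl'.dyckPath_eq_D_cons ((Nat.lt_succ_of_le hdu).trans_le hl'.le)]
        simp [dyckPath, ha]
      · obtain ⟨hd, -, hu, hm⟩ := hl
        exact ⟨p :: m, ⟨hd, by omega, u.lt_succ_self.trans hu, hm⟩,
          dyckPath_cons_eq_U_cons hp (u.lt_succ_self.trans hu)⟩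

lemma bijOn_dyckPath (hdu : d ≤ u) :
    Set.BijOn (dyckPath N d u) {l | IsCover N d u l} {w | IsDyckSuffix N d u w} :=
  ⟨fun _ h => h.isDyckSuffix_dyckPath hdu, injOn_dyckPath, surjOn_dyckPath hdu⟩

end DyckPath

theorem stmt7 (n : ℕ) (hn : 1 ≤ n) :
    Z n (n - 1) = catalan (n - 1) := by
  obtain ⟨N, rfl⟩ := Nat.exists_eq_add_of_le' hn
  rw [Nat.add_sub_cancel]
  calc Z (N + 1) N
      = Nat.card {l // IsCover N 0 0 l} := by simp only [Z, isTT_and_wt_eq_iff_isCover]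
    _ = Nat.card {w // IsDyckSuffix N 0 0 w} := Nat.card_congr (bijOn_dyckPath le_rfl).equiv
    _ = Nat.card {p : DyckWord // p.semilength = N} :=
      (Nat.card_congr (bijOn_toList_isDyckSuffix N).equiv).symm
    _ = catalan N := by
      rw [Nat.card_eq_fintype_card, DyckWord.card_dyckWord_semilength_eq_catalan]
end

section
/- For all integers d≥1 and n≥1, the following identity holds: [(2^{n−1}−1)d² − (2^{n−1}−2)d] + ∑_{m=1}^{n−1} [2^{n−m−1}d² − (2^{n−m−1}−1)d] · Z_n(m) = (d(nd−n+d+1)/2) · C_n − d(d−1). (This expresses that the cardinality of the spanning set S_{d,n} equals the dimension of the Yokonuma–Temperley–Lieb algebra YTL_{d,n}(u).) -/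
/-! Since `Z n 0 = 1`, adding `d (d - 1)` to the left-hand side supplies the term `m = 0` of the
sum, so the identity amounts to the values of `∑ m, x ^ (n - 1 - m) * Z n m` at `x = 1` and
`x = 2`, namely `catalan n` and `(n + 1) * catalan n / 2`.

The exponent counts the integers of `[1, n - 1]` missed by an element of 𝔗ₙ. Refine this sum to
the sum `T a i` over the possible continuations of an interval `[a, i]`. Classifying a
continuation by whether its first interval starts at `a + 1` gives the lattice path recurrence
`T a i = T (a + 1) i + T a (i + 1)` for `a ≤ i`, with the boundary condition
`T (i + 1) i = x * T (i + 1) (i + 1)`. In terms of `s = i - a` and `r = n - 1 - i`, Pascal's rule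
shows that `(2 * r + s + 1).choose r` is the solution for `x = 2`, and that a difference of two
binomial coefficients, a ballot number, is the solution for `x = 1`. -/

/-- The tails after `[a, i]`: the lists which can be appended to an element of 𝔗ₙ whose last
interval is `[a, i]`. The definition also serves for two degenerate pairs: `a = i = 0` gives the
elements of 𝔗ₙ, and `a = i + 1` occurs at the boundary of the recurrence for `tailSum`. -/
def tails (n a i : ℕ) : Set (List (ℕ × ℕ)) :=
  {l | (∀ p ∈ l, p.2 < p.1 ∧ p.1 < n) ∧
    List.IsChain (· < ·) (i :: l.map Prod.fst) ∧
    List.IsChain (· < ·) (a :: l.map fun p => p.1 - p.2)}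

/-- The gaps of a tail `l` after an interval ending at `i`, that is, the integers strictly between
`i` and `n` not covered by `l`, are counted by `gaps n i l`. For `l ∈ 𝔗ₙ` and `i = 0` this is the
complement `n - 1 - wt l` of the weight. -/
def gaps (n i : ℕ) (l : List (ℕ × ℕ)) : ℕ := (Finset.Ico (i + 1) n \ cov l).card

/-- The generating function of the tails after `[a, i]` by number of gaps, evaluated at `x`. It is
a `finsum` over a set that is finite by `finite_tails`, so the junk value `0` does not occur. -/
noncomputable def tailSum {R : Type*} [CommSemiring R] (x : R) (n a i : ℕ) : R :=
  ∑ᶠ l ∈ tails n a i, x ^ gaps n i l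

lemma cov_cons (p : ℕ × ℕ) (l : List (ℕ × ℕ)) :
    cov (p :: l) = Finset.Icc (p.1 - p.2) p.1 ∪ cov l := rfl

lemma nil_mem_tails (n a i : ℕ) : [] ∈ tails n a i := by simp [tails]

lemma cons_mem_tails {n a i : ℕ} {p : ℕ × ℕ} {l : List (ℕ × ℕ)} :
    p :: l ∈ tails n a i ↔
      (p.2 < p.1 ∧ p.1 < n ∧ i < p.1 ∧ a < p.1 - p.2) ∧ l ∈ tails n (p.1 - p.2) p.1 := by
  simp only [tails, Set.mem_ofPred_eq, List.forall_mem_cons, List.map_cons,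
    List.isChain_cons_cons]
  tauto

lemma mem_tails_zero_iff_isTT {n : ℕ} {l : List (ℕ × ℕ)} : l ∈ tails n 0 0 ↔ IsTT n l := by
  cases l with
  | nil => exact iff_of_true (nil_mem_tails n 0 0) ⟨by simp, .nil, .nil⟩
  | cons p l =>
    simp only [tails, IsTT, Set.mem_ofPred_eq, List.forall_mem_cons, List.map_cons,
      List.isChain_cons_cons, Order.add_one_le_iff, Nat.sub_pos_iff_lt]
    constructor
    · rintro ⟨h, ⟨-, h₁⟩, -, h₂⟩
      exact ⟨h, h₁, h₂⟩
    · rintro ⟨h, h₁, h₂⟩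
      exact ⟨h, ⟨by lia, h₁⟩, h.1.1, h₂⟩

lemma tails_succ_subset (n a i : ℕ) : tails n (a + 1) i ⊆ tails n a i := by
  rintro (_ | ⟨p, l⟩) h
  · exact nil_mem_tails n a i
  · rw [cons_mem_tails] at h ⊢
    exact ⟨by lia, h.2⟩

lemma tails_succ_self (n i : ℕ) : tails n (i + 1) i = tails n (i + 1) (i + 1) := by
  ext (_ | ⟨p, l⟩)
  · simp only [nil_mem_tails]
  · simp only [cons_mem_tails]
    exact and_congr_left' (by lia)

lemma tails_succ_left_eq_singleton (a i : ℕ) : tails (i + 1) a i = {[]} := by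
  ext (_ | ⟨p, l⟩)
  · simp only [nil_mem_tails, Set.mem_singleton_iff]
  · simp only [cons_mem_tails, Set.mem_singleton_iff, reduceCtorEq, iff_false]
    lia

lemma finite_tails (n a i : ℕ) : (tails n a i).Finite := by
  induction h : n - i using Nat.strong_induction_on generalizing a i with
  | _ r ih =>
    have hfin : (⋃ p ∈ Set.Ioo i n ×ˢ Set.Iio n,
        List.cons p '' tails n (p.1 - p.2) p.1).Finite := by
      refine ((Set.finite_Ioo i n).prod (Set.finite_Iio n)).biUnion fun p hp => ?_
      obtain ⟨hip, hpn⟩ := hp.1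
      exact (ih (n - p.1) (by lia) _ _ rfl).image _
    refine (hfin.insert []).subset ?_
    rintro (_ | ⟨p, l⟩) hl
    · exact Set.mem_insert _ _
    · obtain ⟨⟨h₁, h₂, h₃, -⟩, hl⟩ := cons_mem_tails.1 hl
      exact Or.inr (Set.mem_biUnion (x := p) ⟨⟨h₃, h₂⟩, h₁.trans h₂⟩ ⟨l, hl, rfl⟩)

lemma cons_mem_tails_sdiff {n a i : ℕ} {p : ℕ × ℕ} {l : List (ℕ × ℕ)} :
    p :: l ∈ tails n a i \ tails n (a + 1) i ↔
      (p.2 < p.1 ∧ p.1 < n ∧ i < p.1 ∧ p.1 - p.2 = a + 1) ∧ l ∈ tails n (a + 1) p.1 := by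
  simp only [Set.mem_sdiff, cons_mem_tails]
  constructor
  · rintro ⟨⟨h, hl⟩, h'⟩
    have hstart : p.1 - p.2 = a + 1 := by
      by_contra hne
      exact h' ⟨by lia, hl⟩
    exact ⟨by lia, hstart ▸ hl⟩
  · rintro ⟨h, hl⟩
    exact ⟨⟨by lia, h.2.2.2 ▸ hl⟩, by lia⟩

lemma tails_sdiff_eq_union {n a i : ℕ} (hai : a ≤ i) (hin : i + 1 < n) :
    tails n a i \ tails n (a + 1) i =
      tails n a (i + 1) \ tails n (a + 1) (i + 1) ∪
        List.cons (i + 1, i - a) '' tails n (a + 1) (i + 1) := by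
  ext (_ | ⟨⟨u, k⟩, l⟩)
  · simp [nil_mem_tails]
  · simp only [Set.mem_union, cons_mem_tails_sdiff, Set.mem_image, List.cons.injEq, Prod.mk.injEq]
    constructor
    · rintro ⟨h, hl⟩
      rcases (show i + 1 < u ∨ u = i + 1 by lia) with hu | rfl
      · exact Or.inl ⟨by lia, hl⟩
      · exact Or.inr ⟨l, hl, ⟨rfl, by lia⟩, rfl⟩
    · rintro (⟨h, hl⟩ | ⟨_, hl, ⟨rfl, rfl⟩, rfl⟩)
      · exact ⟨by lia, hl⟩
      · exact ⟨by lia, hl⟩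

lemma cov_subset_of_mem_tails {n a i : ℕ} {l : List (ℕ × ℕ)} (hl : l ∈ tails n a i) :
    cov l ⊆ Finset.Ico (a + 1) n := by
  induction l generalizing a i with
  | nil => exact Finset.empty_subset _
  | cons p l ih =>
    obtain ⟨h, hl⟩ := cons_mem_tails.1 hl
    rw [cov_cons]
    refine Finset.union_subset (fun t ht => ?_)
      ((ih hl).trans (Finset.Ico_subset_Ico_left (by lia)))
    rw [Finset.mem_Icc] at ht
    rw [Finset.mem_Ico]
    lia

lemma gaps_of_succ_mem_cov {n i : ℕ} {l : List (ℕ × ℕ)} (hin : i + 1 < n) (h : i + 1 ∈ cov l) :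
    gaps n i l = gaps n (i + 1) l := by
  rw [gaps, ← Finset.insert_Ico_add_one_left_eq_Ico hin, Finset.insert_sdiff_of_mem _ h, gaps]

lemma gaps_of_succ_notMem_cov {n i : ℕ} {l : List (ℕ × ℕ)} (hin : i + 1 < n) (h : i + 1 ∉ cov l) :
    gaps n i l = gaps n (i + 1) l + 1 := by
  rw [gaps, ← Finset.insert_Ico_add_one_left_eq_Ico hin, Finset.insert_sdiff_of_notMem _ h,
    Finset.card_insert_of_notMem (by simp), gaps]

lemma gaps_cons_of_le {n i : ℕ} {p : ℕ × ℕ} (hp : p.1 ≤ i) (l : List (ℕ × ℕ)) :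
    gaps n i (p :: l) = gaps n i l := by
  have hdisj : Disjoint (Finset.Ico (i + 1) n) (Finset.Icc (p.1 - p.2) p.1) := by
    rw [Finset.disjoint_left]
    intro t
    rw [Finset.mem_Ico, Finset.mem_Icc]
    lia
  rw [gaps, cov_cons, ← Finset.sup_eq_union, ← sdiff_sdiff_left,
    Finset.sdiff_eq_self_of_disjoint hdisj, gaps]

lemma gaps_zero_of_isTT {n : ℕ} {l : List (ℕ × ℕ)} (hl : IsTT n l) :
    gaps n 0 l = n - wt l - 1 := by
  rw [gaps, Finset.card_sdiff_of_subset (cov_subset_of_mem_tails (mem_tails_zero_iff_isTT.2 hl)),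
    Nat.card_Ico, wt]
  lia

section TailSum

variable {R : Type*} [CommSemiring R] (x : R)

lemma tailSum_eq_add_finsum_sdiff (n a i : ℕ) :
    tailSum x n a i =
      tailSum x n (a + 1) i + ∑ᶠ l ∈ tails n a i \ tails n (a + 1) i, x ^ gaps n i l := by
  rw [tailSum, tailSum, ← finsum_mem_union Set.disjoint_sdiff_right (finite_tails _ _ _)
    (finite_tails _ _ _).sdiff, Set.union_sdiff_cancel (tails_succ_subset _ _ _)]

-- A tail in the difference starts with an interval `[a + 1, u]`. If `i + 1 < u`, it is also a tail
-- after `[a, i + 1]`; if `u = i + 1`, what follows that interval is a tail after `[a + 1, i + 1]`.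
lemma finsum_tails_sdiff {n a i : ℕ} (hai : a ≤ i) (hin : i + 1 < n) :
    ∑ᶠ l ∈ tails n a i \ tails n (a + 1) i, x ^ gaps n i l = tailSum x n a (i + 1) := by
  have hdisj : Disjoint (tails n a (i + 1) \ tails n (a + 1) (i + 1))
      (List.cons (i + 1, i - a) '' tails n (a + 1) (i + 1)) := by
    rw [Set.disjoint_left]
    rintro _ h ⟨l, -, rfl⟩
    exact lt_irrefl _ (cons_mem_tails_sdiff.1 h).1.2.2.1
  have hgaps {l} (hl : l ∈ tails n a i \ tails n (a + 1) i) :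
      gaps n i l = gaps n (i + 1) l := by
    rcases l with _ | ⟨p, l⟩
    · exact absurd (nil_mem_tails _ _ _) hl.2
    · have h := (cons_mem_tails_sdiff.1 hl).1
      refine gaps_of_succ_mem_cov hin (Finset.mem_union_left _ (Finset.mem_Icc.2 ?_))
      lia
  rw [finsum_mem_congr rfl fun l hl => by rw [hgaps hl], tails_sdiff_eq_union hai hin,
    finsum_mem_union hdisj (finite_tails _ _ _).sdiff ((finite_tails _ _ _).image _),
    finsum_mem_image List.cons_injective.injOn, tailSum_eq_add_finsum_sdiff, add_comm]
  simp only [gaps_cons_of_le (p := (i + 1, i - a)) le_rfl, tailSum]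

lemma tailSum_recurrence {n a i : ℕ} (hai : a ≤ i) (hin : i + 1 < n) :
    tailSum x n a i = tailSum x n (a + 1) i + tailSum x n a (i + 1) := by
  rw [tailSum_eq_add_finsum_sdiff, finsum_tails_sdiff x hai hin]

lemma tailSum_succ_self {n i : ℕ} (hin : i + 1 < n) :
    tailSum x n (i + 1) i = x * tailSum x n (i + 1) (i + 1) := by
  rw [tailSum, tailSum, mul_finsum_mem' _ _ (finite_tails _ _ _), tails_succ_self]
  refine finsum_mem_congr rfl fun l hl => ?_
  have hi : i + 1 ∉ cov l := fun h => by simpa using cov_subset_of_mem_tails hl h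
  rw [gaps_of_succ_notMem_cov hin hi, pow_succ']

lemma tailSum_succ_left (a i : ℕ) : tailSum x (i + 1) a i = 1 := by
  simp [tailSum, tails_succ_left_eq_singleton, gaps]

lemma tailSum_eq_of_recurrence {x : R} {K : ℕ → ℕ → R} (hzero : ∀ s, K s 0 = 1)
    (hdiag : ∀ r, K 0 (r + 1) = x * K 0 r + K 1 r)
    (hstep : ∀ s r, K (s + 1) (r + 1) = K s (r + 1) + K (s + 2) r) (r s a : ℕ) :
    tailSum x (a + s + r + 1) a (a + s) = K s r := by
  induction r generalizing s a with
  | zero => rw [Nat.add_zero, tailSum_succ_left, hzero]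
  | succ r ihr =>
    induction s generalizing a with
    | zero =>
      rw [tailSum_recurrence x (by lia) (by lia), add_zero a, tailSum_succ_self x (by lia), hdiag,
        ← ihr 0 (a + 1), ← ihr 1 a]
      congr 3 <;> ring
    | succ s ihs =>
      rw [tailSum_recurrence x (by lia) (by lia), hstep, ← ihs (a + 1), ← ihr (s + 2) a]
      congr 2 <;> ring

lemma sum_pow_mul_Z {n : ℕ} (hn : 1 ≤ n) :
    ∑ m ∈ Finset.range n, x ^ (n - m - 1) * (Z n m : R) = tailSum x n 0 0 := by
  have hmem (l : List (ℕ × ℕ)) : l ∈ (finite_tails n 0 0).toFinset ↔ IsTT n l := by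
    rw [Set.Finite.mem_toFinset, mem_tails_zero_iff_isTT]
  have hwt : ∀ l ∈ (finite_tails n 0 0).toFinset, wt l ∈ Finset.range n := by
    intro l hl
    have hcard :=
      Finset.card_le_card (cov_subset_of_mem_tails ((finite_tails n 0 0).mem_toFinset.1 hl))
    rw [Nat.card_Ico] at hcard
    rw [Finset.mem_range, wt]
    lia
  rw [tailSum, finsum_mem_eq_finite_toFinset_sum _ (finite_tails n 0 0),
    ← Finset.sum_fiberwise_of_maps_to hwt]
  refine Finset.sum_congr rfl fun m _ => ?_
  have hZ : Z n m = ((finite_tails n 0 0).toFinset.filter fun l => wt l = m).card :=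
    Nat.subtype_card _ fun l => by rw [Finset.mem_filter, hmem]
  rw [hZ, ← nsmul_eq_mul', ← Finset.sum_const]
  refine Finset.sum_congr rfl fun l hl => ?_
  rw [Finset.mem_filter, hmem] at hl
  rw [gaps_zero_of_isTT hl.1, hl.2]

end TailSum

lemma choose_two_mul_add_recurrence (t s r : ℕ) :
    (2 * (r + 1) + (s + 1) + t).choose (r + 1) =
      (2 * (r + 1) + s + t).choose (r + 1) + (2 * r + (s + 2) + t).choose r := by
  rw [show 2 * (r + 1) + (s + 1) + t = 2 * r + (s + 2) + t + 1 by ring, Nat.choose_succ_succ,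
    add_comm, show 2 * (r + 1) + s + t = 2 * r + (s + 2) + t by ring]

lemma choose_two_mul_add_three (r : ℕ) :
    (2 * r + 3).choose (r + 1) = 2 * (2 * r + 1).choose r + (2 * r + 2).choose r := by
  rw [Nat.choose_succ_succ, Nat.choose_succ_succ' (2 * r + 1), Nat.choose_symm_half]
  ring

lemma tailSum_two {R : Type*} [CommSemiring R] (r : ℕ) :
    tailSum (2 : R) (r + 1) 0 0 = (2 * r + 1).choose r := by
  have h := tailSum_eq_of_recurrence (x := (2 : R))
    (K := fun s r => ((2 * r + s + 1).choose r : R)) (by simp)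
    (fun r => mod_cast congrArg (Nat.cast (R := R)) (choose_two_mul_add_three r))
    (fun s r => mod_cast congrArg (Nat.cast (R := R)) (choose_two_mul_add_recurrence 1 s r)) r 0 0
  simpa only [zero_add, add_zero] using h

-- The solution `K s r` of the recurrence is the ballot number
-- `(2 * r + s + 1).choose r - (2 * r + s + 1).choose (r - 1)` given by the reflection principle,
-- rewritten by Pascal's rule so that `r = 0` is not a separate case.
lemma tailSum_one {R : Type*} [CommRing R] (r : ℕ) :
    tailSum (1 : R) (r + 1) 0 0 = 2 * (2 * r + 1).choose r - (2 * r + 2).choose r := by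
  have h := tailSum_eq_of_recurrence (x := (1 : R))
    (K := fun s r => 2 * ((2 * r + s + 1).choose r : R) - (2 * r + s + 2).choose r)
    (by norm_num) (fun r => ?_) (fun s r => ?_) r 0 0
  · simpa only [zero_add, add_zero] using h
  · have h₁ := congrArg (Nat.cast (R := R)) (choose_two_mul_add_three r)
    have h₂ := congrArg (Nat.cast (R := R)) (Nat.choose_succ_succ' (2 * r + 3) r)
    push_cast at h₁ h₂
    change 2 * ((2 * r + 3).choose (r + 1) : R) - (2 * r + 4).choose (r + 1) =
      1 * (2 * ((2 * r + 1).choose r : R) - (2 * r + 2).choose r) +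
        (2 * ((2 * r + 2).choose r : R) - (2 * r + 3).choose r)
    linear_combination h₁ - h₂
  · have h₁ := congrArg (Nat.cast (R := R)) (choose_two_mul_add_recurrence 1 s r)
    have h₂ := congrArg (Nat.cast (R := R)) (choose_two_mul_add_recurrence 2 s r)
    push_cast at h₁ h₂
    linear_combination 2 * h₁ - h₂

lemma centralBinom_succ_eq_two_mul_choose (r : ℕ) :
    (r + 1).centralBinom = 2 * (2 * r + 1).choose r := by
  rw [Nat.centralBinom_eq_two_mul_choose, Nat.mul_succ, Nat.choose_succ_succ,
    Nat.choose_symm_half, ← Nat.two_mul (Nat.choose _ _)]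

lemma catalan_add_choose (n : ℕ) :
    catalan n + (2 * n).choose (n + 1) = n.centralBinom := by
  have hcat := succ_mul_catalan_eq_centralBinom n
  have hchoose : (2 * n).choose (n + 1) * (n + 1) = n.centralBinom * n := by
    rw [Nat.choose_succ_right_eq, ← Nat.centralBinom_eq_two_mul_choose,
      show 2 * n - n = n by lia]
  refine Nat.eq_of_mul_eq_mul_left n.succ_pos ?_
  rw [Nat.succ_eq_add_one]
  linear_combination hcat + hchoose

lemma sum_Z {n : ℕ} (hn : 1 ≤ n) : ∑ m ∈ Finset.range n, Z n m = catalan n := by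
  obtain ⟨r, rfl⟩ := Nat.exists_eq_add_of_le' hn
  have hsum := sum_pow_mul_Z (1 : ℤ) hn
  have hcat := catalan_add_choose (r + 1)
  rw [centralBinom_succ_eq_two_mul_choose,
    Nat.choose_symm_of_eq_add (show 2 * (r + 1) = r + 1 + 1 + r by ring), Nat.mul_succ] at hcat
  simp only [tailSum_one, one_pow, one_mul] at hsum
  zify at hcat ⊢
  linarith

lemma two_mul_sum_two_pow_mul_Z {n : ℕ} (hn : 1 ≤ n) :
    2 * ∑ m ∈ Finset.range n, 2 ^ (n - m - 1) * Z n m = (n + 1) * catalan n := by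
  obtain ⟨r, rfl⟩ := Nat.exists_eq_add_of_le' hn
  have hsum := sum_pow_mul_Z 2 hn
  simp only [tailSum_two, Nat.cast_id] at hsum
  rw [hsum, succ_mul_catalan_eq_centralBinom, centralBinom_succ_eq_two_mul_choose]

lemma wt_eq_zero_iff {l : List (ℕ × ℕ)} : wt l = 0 ↔ l = [] := by
  cases l with
  | nil => simp [wt, cov]
  | cons p l => simp [wt, cov_cons]

lemma Z_zero (n : ℕ) : Z n 0 = 1 := by
  rw [Z, Nat.card_eq_one_iff_unique]
  refine ⟨⟨fun l l' => Subtype.ext ?_⟩,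
    ⟨[], mem_tails_zero_iff_isTT.1 (nil_mem_tails n 0 0), wt_eq_zero_iff.2 rfl⟩⟩
  rw [wt_eq_zero_iff.1 l.2.2, wt_eq_zero_iff.1 l'.2.2]

theorem stmt9_general {K : Type*} [Field K] [NeZero (2 : K)] (d : K) {n : ℕ} (hn : 1 ≤ n) :
    ((2 : K) ^ (n - 1) - 1) * d ^ 2 - ((2 : K) ^ (n - 1) - 2) * d
      + ∑ m ∈ Finset.Icc 1 (n - 1),
          ((2 : K) ^ (n - m - 1) * d ^ 2 - ((2 : K) ^ (n - m - 1) - 1) * d) * (Z n m : K)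
      = d * (n * d - n + d + 1) / 2 * (catalan n : K) - d * (d - 1) := by
  have hone : ∑ m ∈ Finset.range n, (Z n m : K) = catalan n := mod_cast congrArg _ (sum_Z hn)
  have htwo : ∑ m ∈ Finset.range n, (2 : K) ^ (n - m - 1) * (Z n m : K) =
      (n + 1) * catalan n / 2 := by
    rw [eq_div_iff two_ne_zero, mul_comm]
    exact_mod_cast congrArg (Nat.cast (R := K)) (two_mul_sum_two_pow_mul_Z hn)
  have hsplit : ∑ m ∈ Finset.range n,
        ((2 : K) ^ (n - m - 1) * d ^ 2 - ((2 : K) ^ (n - m - 1) - 1) * d) * (Z n m : K)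
      = (d ^ 2 - d) * ∑ m ∈ Finset.range n, (2 : K) ^ (n - m - 1) * (Z n m : K)
        + d * ∑ m ∈ Finset.range n, (Z n m : K) := by
    rw [Finset.mul_sum, Finset.mul_sum, ← Finset.sum_add_distrib]
    exact Finset.sum_congr rfl fun m _ => by ring
  have hIcc : Finset.Icc 1 (n - 1) = Finset.Ico 1 n := by
    ext m
    rw [Finset.mem_Icc, Finset.mem_Ico]
    lia
  rw [hone, htwo, Finset.sum_range_eq_add_Ico _ hn, Z_zero, Nat.sub_zero, ← hIcc,
    Nat.cast_one] at hsplit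
  have hrhs : d * (n * d - n + d + 1) / 2 * (catalan n : K) =
      (d ^ 2 - d) * ((n + 1) * catalan n / 2) + d * catalan n := by
    field_simp
    ring
  linear_combination hsplit - hrhs

theorem stmt9 (d n : ℕ) (hd : 1 ≤ d) (hn : 1 ≤ n) :
    ((2 : ℚ) ^ (n - 1) - 1) * (d : ℚ) ^ 2 - ((2 : ℚ) ^ (n - 1) - 2) * (d : ℚ)
      + ∑ m ∈ Finset.Icc 1 (n - 1),
          (((2 : ℚ) ^ (n - m - 1)) * (d : ℚ) ^ 2 - ((2 : ℚ) ^ (n - m - 1) - 1) * (d : ℚ))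
            * (Z n m : ℚ)
      = (d : ℚ) * ((n : ℚ) * (d : ℚ) - (n : ℚ) + (d : ℚ) + 1) / 2 * (catalan n : ℚ)
          - (d : ℚ) * ((d : ℚ) - 1) :=
  stmt9_general (d : ℚ) hn
end

section
/- In the Yokonuma–Temperley–Lieb algebra YTL_{d,n}(u) (n≥3), the following relations hold: (1) (t_i−t_j)(t_i−t_k)(t_j−t_k) = 0 for all 1≤i,j,k≤n; (2) (t_j−t_i)(t_j−t_{i+1})(g_i+1) = 0 for all 1≤i≤n−1 and all 1≤j≤n. -/
noncomputable section

/-- The field `K = ℂ(u)` of rational functions over `ℂ`. -/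
abbrev K : Type := RatFunc ℂ

/-- The indeterminate `u ∈ ℂ(u)`. -/
def uu : K := RatFunc.X

/-- The free `K`-algebra on generators `g_i` (`i : ℕ`, left summand) and `t_j`
(`j : ℕ`, right summand); the generators with invalid indices are killed by the relations. -/
abbrev FA : Type := FreeAlgebra K (ℕ ⊕ ℕ)

/-- The free generator `g_i`. -/
def Gf (i : ℕ) : FA := FreeAlgebra.ι K (Sum.inl i)

/-- The free generator `t_j`. -/
def Tf (j : ℕ) : FA := FreeAlgebra.ι K (Sum.inr j)

/-- The element `e_i = (1/d) ∑_{s=0}^{d-1} t_i^s t_{i+1}^{d-s}`. -/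
def ef (d i : ℕ) : FA :=
  ((d : K)⁻¹) • ∑ s ∈ Finset.range d, Tf i ^ s * Tf (i + 1) ^ (d - s)

/-- The transposition `s_i = (i, i+1)` applied to `j`. -/
def swapIdx (i j : ℕ) : ℕ := if j = i then i + 1 else if j = i + 1 then i else j

/-- The defining relations of the Yokonuma–Hecke algebra `Y_{d,n}(u)`, together with junk
relations killing the generators with out-of-range indices (so that the quotient is presented
exactly by `g_1, …, g_{n-1}, t_1, …, t_n`). -/
inductive YRel (d n : ℕ) : FA → FA → Prop
  | commute (i j : ℕ) (hi : 1 ≤ i) (hin : i + 1 ≤ n) (hj : 1 ≤ j) (hjn : j + 1 ≤ n)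
      (hfar : i + 1 < j ∨ j + 1 < i) :
      YRel d n (Gf i * Gf j) (Gf j * Gf i)
  | braid (i : ℕ) (hi : 1 ≤ i) (hin : i + 2 ≤ n) :
      YRel d n (Gf i * Gf (i + 1) * Gf i) (Gf (i + 1) * Gf i * Gf (i + 1))
  | tcomm (i j : ℕ) (hi : 1 ≤ i) (hin : i ≤ n) (hj : 1 ≤ j) (hjn : j ≤ n) :
      YRel d n (Tf i * Tf j) (Tf j * Tf i)
  | tg (i j : ℕ) (hi : 1 ≤ i) (hin : i + 1 ≤ n) (hj : 1 ≤ j) (hjn : j ≤ n) :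
      YRel d n (Tf j * Gf i) (Gf i * Tf (swapIdx i j))
  | torder (j : ℕ) (hj : 1 ≤ j) (hjn : j ≤ n) :
      YRel d n (Tf j ^ d) 1
  | quad (i : ℕ) (hi : 1 ≤ i) (hin : i + 1 ≤ n) :
      YRel d n (Gf i ^ 2) (1 + (uu - 1) • ef d i + (uu - 1) • (ef d i * Gf i))
  | gjunk (i : ℕ) (h : i = 0 ∨ n ≤ i) : YRel d n (Gf i) 0
  | tjunk (j : ℕ) (h : j = 0 ∨ n < j) : YRel d n (Tf j) 0

/-- The Yokonuma–Hecke algebra `Y_{d,n}(u)`. -/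
abbrev YH (d n : ℕ) : Type := RingQuot (YRel d n)

/-- The generator `g_i` of `Y_{d,n}(u)`. -/
def yg (d n : ℕ) (i : ℕ) : YH d n := RingQuot.mkAlgHom K (YRel d n) (Gf i)

/-- The generator `t_j` of `Y_{d,n}(u)`. -/
def yt (d n : ℕ) (j : ℕ) : YH d n := RingQuot.mkAlgHom K (YRel d n) (Tf j)

/-- The idempotent `e_i ∈ Y_{d,n}(u)`. -/
def ye (d n : ℕ) (i : ℕ) : YH d n := RingQuot.mkAlgHom K (YRel d n) (ef d i)

end

/-- The defining relations of the Yokonuma–Temperley–Lieb algebra `YTL_{d,n}(u)`: the relations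
of `Y_{d,n}(u)` together with
`g_i g_{i+1} g_i + g_i g_{i+1} + g_{i+1} g_i + g_i + g_{i+1} + 1 = 0` for `1 ≤ i ≤ n-2`. -/
inductive YTLRel (d n : ℕ) : FA → FA → Prop
  | base {a b : FA} : YRel d n a b → YTLRel d n a b
  | tl (i : ℕ) (hi : 1 ≤ i) (hin : i + 2 ≤ n) :
      YTLRel d n
        (Gf i * Gf (i + 1) * Gf i + Gf i * Gf (i + 1) + Gf (i + 1) * Gf i +
          Gf i + Gf (i + 1) + 1) 0

/-- The Yokonuma–Temperley–Lieb algebra `YTL_{d,n}(u)`, the quotient of `Y_{d,n}(u)` by the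
two-sided ideal generated by the elements
`g_i g_{i+1} g_i + g_i g_{i+1} + g_{i+1} g_i + g_i + g_{i+1} + 1`, `1 ≤ i ≤ n-2`. -/
abbrev YTL (d n : ℕ) : Type := RingQuot (YTLRel d n)

/-- The image of the generator `g_i` in `YTL_{d,n}(u)`. -/
noncomputable def zg (d n : ℕ) (i : ℕ) : YTL d n :=
  RingQuot.mkAlgHom K (YTLRel d n) (Gf i)

/-- The image of the generator `t_j` in `YTL_{d,n}(u)`. -/
noncomputable def zt (d n : ℕ) (j : ℕ) : YTL d n :=
  RingQuot.mkAlgHom K (YTLRel d n) (Tf j)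

/-!
If right multiplication by `w` acts on each summand of a vanishing sum `∑ x_k` as left
multiplication by an element `a_k`, the `a_k` commuting pairwise, then every `x_k` is annihilated
by `∏_{l ≠ k} (a_k - a_l)`. The Temperley–Lieb relation is the vanishing of the sum of
`g_i g_{i+1} (g_i + 1)`, `g_{i+1} (g_i + 1)` and `g_i + 1`, on which right multiplication by
`t_{i+2}` acts as left multiplication by `t_i`, `t_{i+1}` and `t_{i+2}`. This gives (2) for
`j = i + 2`, and by symmetry for `j = i - 1`. Applied to the two summands of (2), the same
principle gives (1) for `k = j + 1`. Since each `g_m` is invertible and conjugates the `t_j` through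
the transposition `s_m`, these cases imply all others.
-/

section Ring

variable {R : Type*} [Ring R] {a b c g h w x y z : R}

lemma sub_mul_eq_zero_of_semiconjBy (hx : SemiconjBy x w a) (hy : SemiconjBy y w b)
    (hsum : x + y = 0) : (b - a) * y = 0 :=
  calc (b - a) * y = (x + y) * w - a * (x + y) := by
        rw [add_mul, hx.eq, hy.eq]
        noncomm_ring
    _ = 0 := by simp [hsum]

lemma sub_mul_sub_mul_eq_zero_of_semiconjBy (hab : Commute a b) (hac : Commute a c)
    (hx : SemiconjBy x w a) (hy : SemiconjBy y w b) (hz : SemiconjBy z w c)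
    (hsum : x + y + z = 0) : (c - b) * (c - a) * z = 0 := by
  have hsum' : (b - a) * y + (c - a) * z = 0 :=
    calc (b - a) * y + (c - a) * z = (x + y + z) * w - a * (x + y + z) := by
          rw [add_mul, add_mul, hx.eq, hy.eq, hz.eq]
          noncomm_ring
      _ = 0 := by simp [hsum]
  have hy' : SemiconjBy ((b - a) * y) w b := SemiconjBy.mul_left ((Commute.refl b).sub_left hab) hy
  have hz' : SemiconjBy ((c - a) * z) w c := SemiconjBy.mul_left ((Commute.refl c).sub_left hac) hz
  rw [mul_assoc]
  exact sub_mul_eq_zero_of_semiconjBy hy' hz' hsum'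

lemma sub_mul_sub_mul_add_one_eq_zero (hab : Commute a b) (hbc : Commute b c)
    (hgb : SemiconjBy g b a) (hgc : Commute g c) (hhc : SemiconjBy h c b)
    (hrel : g * h * g + g * h + h * g + g + h + 1 = 0) :
    (c - a) * (c - b) * (g + 1) = 0 := by
  have hone : SemiconjBy (g + 1) c c := hgc.add_left (SemiconjBy.one_left c)
  have hh : SemiconjBy (h * (g + 1)) c b := hhc.mul_left hone
  have hgh : SemiconjBy (g * (h * (g + 1))) c a := hgb.mul_left hh
  refine sub_mul_sub_mul_eq_zero_of_semiconjBy hab.symm hbc hh hgh hone ?_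
  rw [← hrel]
  noncomm_ring

lemma mul_sub_eq_zero_of_mul_add_one_eq_zero (hxa : Commute x a) (hxb : Commute x b)
    (hga : SemiconjBy g a b) (hx : x * (g + 1) = 0) : x * (a - b) = 0 := by
  have hxg : SemiconjBy (x * g) a b := SemiconjBy.mul_left hxb hga
  rw [(hxa.sub_right hxb).eq]
  exact sub_mul_eq_zero_of_semiconjBy hxg hxa (by rwa [mul_add, mul_one] at hx)

lemma eq_zero_of_semiconjBy_of_isLeftRegular (hg : IsLeftRegular g) (hsemi : SemiconjBy g x y)
    (hy : y = 0) : x = 0 := by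
  rw [← hg.mul_left_eq_zero_iff, hsemi.eq, hy, zero_mul]

lemma pow_mul_sum_pow_mul_pow {d : ℕ} (hab : Commute a b) (ha : a ^ d = 1) (hb : b ^ d = 1)
    (s : ℕ) :
    a ^ s * ∑ r ∈ Finset.range d, a ^ r * b ^ (d - r) =
      b ^ s * ∑ r ∈ Finset.range d, a ^ r * b ^ (d - r) := by
  have hfactor : ∑ r ∈ Finset.range d, a ^ r * b ^ (d - r) =
      (∑ r ∈ Finset.range d, a ^ r * b ^ (d - 1 - r)) * b := by
    rw [Finset.sum_mul]
    refine Finset.sum_congr rfl fun r hr => ?_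
    have hr' : d - r = d - 1 - r + 1 := by
      have := Finset.mem_range.mp hr
      omega
    rw [mul_assoc, ← pow_succ, hr']
  rw [← sub_eq_zero, ← sub_mul, ← hab.geom_sum₂_mul, hfactor, mul_assoc, ← mul_assoc (a - b),
    hab.mul_geom_sum₂, ha, hb, sub_self, zero_mul, mul_zero]

lemma sum_pow_mul_pow_mul_self {d : ℕ} (hab : Commute a b) (ha : a ^ d = 1) (hb : b ^ d = 1) :
    (∑ s ∈ Finset.range d, a ^ s * b ^ (d - s)) * ∑ s ∈ Finset.range d, a ^ s * b ^ (d - s) =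
      d • ∑ s ∈ Finset.range d, a ^ s * b ^ (d - s) := by
  set N := ∑ s ∈ Finset.range d, a ^ s * b ^ (d - s)
  have hterm : ∀ s ∈ Finset.range d, a ^ s * b ^ (d - s) * N = N := fun s hs =>
    calc a ^ s * b ^ (d - s) * N = b ^ (d - s) * (a ^ s * N) := by
          rw [(hab.pow_pow s (d - s)).eq, mul_assoc]
      _ = b ^ (d - s + s) * N := by
          rw [pow_mul_sum_pow_mul_pow hab ha hb, ← mul_assoc, ← pow_add]
      _ = N := by rw [Nat.sub_add_cancel (Finset.mem_range.mp hs).le, hb, one_mul]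
  rw [Finset.sum_mul, Finset.sum_congr rfl hterm, Finset.sum_const, Finset.card_range]

end Ring

section Algebra

variable {F A : Type*} [Field F] [Ring A] [Algebra F A]

lemma isIdempotentElem_inv_smul_sum_pow_mul_pow {a b : A} {d : ℕ} (hab : Commute a b)
    (ha : a ^ d = 1) (hb : b ^ d = 1) :
    IsIdempotentElem ((d : F)⁻¹ • ∑ s ∈ Finset.range d, a ^ s * b ^ (d - s)) := by
  have hinv : (d : F)⁻¹ * (d : F)⁻¹ * d = (d : F)⁻¹ := by
    simpa only [inv_inv, mul_right_comm] using mul_inv_mul_cancel (d : F)⁻¹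
  rw [IsIdempotentElem, smul_mul_smul_comm, sum_pow_mul_pow_mul_self hab ha hb,
    ← Nat.cast_smul_eq_nsmul F, smul_smul, hinv]

lemma add_inv_sub_one_smul_mul_self_eq_one {q : F} {e g : A} (hq : q ≠ 0)
    (he : IsIdempotentElem e) (hg : g ^ 2 = 1 + (q - 1) • e + (q - 1) • (e * g)) :
    (g + (q⁻¹ - 1) • (e + e * g)) * g = 1 := by
  have heg : e * g ^ 2 = q • e + (q - 1) • (e * g) := by
    simp only [hg, mul_add, mul_one, mul_smul_comm, ← mul_assoc, he.eq]
    module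
  calc (g + (q⁻¹ - 1) • (e + e * g)) * g
      = g ^ 2 + (q⁻¹ - 1) • (e * g + e * g ^ 2) := by
        rw [add_mul, smul_mul_assoc, add_mul, mul_assoc, sq]
    _ = 1 := by
        rw [heg, hg]
        match_scalars <;> field_simp <;> ring

end Algebra

lemma swapIdx_self (i : ℕ) : swapIdx i i = i + 1 := by
  simp [swapIdx]

lemma swapIdx_succ (i : ℕ) : swapIdx i (i + 1) = i := by
  simp [swapIdx]

lemma swapIdx_of_ne {i j : ℕ} (hi : j ≠ i) (hi' : j ≠ i + 1) : swapIdx i j = j := by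
  simp [swapIdx, hi, hi']

lemma swapIdx_swapIdx (i j : ℕ) : swapIdx i (swapIdx i j) = j := by
  grind [swapIdx]

lemma swapIdx_mem_Icc {n i j : ℕ} (hi : 1 ≤ i) (hin : i + 1 ≤ n) (hj : j ∈ Set.Icc 1 n) :
    swapIdx i j ∈ Set.Icc 1 n := by
  grind [swapIdx]

section Generators

variable {d n : ℕ}

lemma zg_eq_zero {i : ℕ} (hi : i = 0 ∨ n ≤ i) : zg d n i = 0 := by
  simpa [zg] using RingQuot.mkAlgHom_rel K (YTLRel.base (YRel.gjunk (d := d) i hi))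

lemma zt_eq_zero {j : ℕ} (hj : j = 0 ∨ n < j) : zt d n j = 0 := by
  simpa [zt] using RingQuot.mkAlgHom_rel K (YTLRel.base (YRel.tjunk (d := d) j hj))

lemma commute_zt (i j : ℕ) : Commute (zt d n i) (zt d n j) := by
  by_cases hi : i = 0 ∨ n < i
  · simp [zt_eq_zero hi]
  by_cases hj : j = 0 ∨ n < j
  · simp [zt_eq_zero hj]
  simpa [zt, commute_iff_eq] using RingQuot.mkAlgHom_rel K (YTLRel.base
    (YRel.tcomm (d := d) i j (by omega) (by omega) (by omega) (by omega)))

lemma commute_zt_sub_zt (i j k l : ℕ) :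
    Commute (zt d n i - zt d n j) (zt d n k - zt d n l) :=
  ((commute_zt i k).sub_right (commute_zt i l)).sub_left
    ((commute_zt j k).sub_right (commute_zt j l))

lemma commute_zg {i j : ℕ} (hij : i + 1 < j ∨ j + 1 < i) : Commute (zg d n i) (zg d n j) := by
  by_cases hi : i = 0 ∨ n ≤ i
  · simp [zg_eq_zero hi]
  by_cases hj : j = 0 ∨ n ≤ j
  · simp [zg_eq_zero hj]
  simpa [zg, commute_iff_eq] using RingQuot.mkAlgHom_rel K (YTLRel.base
    (YRel.commute (d := d) i j (by omega) (by omega) (by omega) (by omega) hij))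

lemma zg_mul_zg_succ_mul_zg (i : ℕ) :
    zg d n i * zg d n (i + 1) * zg d n i = zg d n (i + 1) * zg d n i * zg d n (i + 1) := by
  by_cases hi : i = 0 ∨ n ≤ i
  · simp [zg_eq_zero hi]
  by_cases hi' : n ≤ i + 1
  · simp [zg_eq_zero (.inr hi')]
  simpa [zg] using RingQuot.mkAlgHom_rel K (YTLRel.base
    (YRel.braid (d := d) i (by omega) (by omega)))

lemma semiconjBy_zg_zt (i j : ℕ) : SemiconjBy (zg d n i) (zt d n j) (zt d n (swapIdx i j)) := by
  by_cases hi : i = 0 ∨ n ≤ i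
  · simp [zg_eq_zero hi]
  by_cases hj : j = 0 ∨ n < j
  · rw [swapIdx_of_ne (by omega) (by omega), zt_eq_zero hj]
    exact SemiconjBy.zero_right _
  obtain ⟨hs, hsn⟩ : swapIdx i j ∈ Set.Icc 1 n :=
    swapIdx_mem_Icc (by omega) (by omega) ⟨by omega, by omega⟩
  have htg : zt d n (swapIdx i j) * zg d n i = zg d n i * zt d n (swapIdx i (swapIdx i j)) := by
    simpa [zt, zg] using RingQuot.mkAlgHom_rel K (YTLRel.base
      (YRel.tg (d := d) i (swapIdx i j) (by omega) (by omega) hs hsn))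
  rw [swapIdx_swapIdx] at htg
  exact htg.symm

lemma semiconjBy_zg_zt_self (i : ℕ) : SemiconjBy (zg d n i) (zt d n i) (zt d n (i + 1)) := by
  simpa only [swapIdx_self] using semiconjBy_zg_zt (d := d) (n := n) i i

lemma semiconjBy_zg_zt_succ (i : ℕ) : SemiconjBy (zg d n i) (zt d n (i + 1)) (zt d n i) := by
  simpa only [swapIdx_succ] using semiconjBy_zg_zt (d := d) (n := n) i (i + 1)

lemma commute_zg_zt {i j : ℕ} (hi : j ≠ i) (hi' : j ≠ i + 1) :
    Commute (zg d n i) (zt d n j) := by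
  have hsemi := semiconjBy_zg_zt (d := d) (n := n) i j
  rwa [swapIdx_of_ne hi hi'] at hsemi

lemma zt_pow {j : ℕ} (hj : 1 ≤ j) (hjn : j ≤ n) : zt d n j ^ d = 1 := by
  simpa [zt] using RingQuot.mkAlgHom_rel K (YTLRel.base (YRel.torder (d := d) j hj hjn))

/-- The image in `YTL_{d,n}(u)` of the idempotent `e_i` of `Y_{d,n}(u)`. -/
noncomputable def ze (d n i : ℕ) : YTL d n := RingQuot.mkAlgHom K (YTLRel d n) (ef d i)

lemma isIdempotentElem_ze {i : ℕ} (hi : 1 ≤ i) (hin : i + 1 ≤ n) :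
    IsIdempotentElem (ze d n i) := by
  have hze : ze d n i =
      (d : K)⁻¹ • ∑ s ∈ Finset.range d, zt d n i ^ s * zt d n (i + 1) ^ (d - s) := by
    simp [ze, ef, zt]
  rw [hze]
  exact isIdempotentElem_inv_smul_sum_pow_mul_pow (commute_zt i (i + 1))
    (zt_pow hi (by omega)) (zt_pow (by omega) hin)

lemma zg_sq {i : ℕ} (hi : 1 ≤ i) (hin : i + 1 ≤ n) :
    zg d n i ^ 2 = 1 + (uu - 1) • ze d n i + (uu - 1) • (ze d n i * zg d n i) := by
  simpa [zg, ze] using RingQuot.mkAlgHom_rel K (YTLRel.base (YRel.quad (d := d) i hi hin))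

lemma isLeftRegular_zg {i : ℕ} (hi : 1 ≤ i) (hin : i + 1 ≤ n) : IsLeftRegular (zg d n i) :=
  isLeftRegular_of_mul_eq_one <| add_inv_sub_one_smul_mul_self_eq_one RatFunc.X_ne_zero
    (isIdempotentElem_ze hi hin) (zg_sq hi hin)

lemma zg_temperleyLieb {i : ℕ} (hi : 1 ≤ i) (hin : i + 2 ≤ n) :
    zg d n i * zg d n (i + 1) * zg d n i + zg d n i * zg d n (i + 1) +
      zg d n (i + 1) * zg d n i + zg d n i + zg d n (i + 1) + 1 = 0 := by
  simpa [zg] using RingQuot.mkAlgHom_rel K (YTLRel.tl (d := d) i hi hin)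

end Generators

section Relations

variable {d n : ℕ}

lemma zt_add_two_sub_mul_sub_mul_zg_add_one_eq_zero {i : ℕ} (hi : 1 ≤ i) (hin : i + 2 ≤ n) :
    (zt d n (i + 2) - zt d n i) * (zt d n (i + 2) - zt d n (i + 1)) * (zg d n i + 1) = 0 :=
  sub_mul_sub_mul_add_one_eq_zero (commute_zt _ _) (commute_zt _ _) (semiconjBy_zg_zt_succ i)
    (commute_zg_zt (by omega) (by omega)) (semiconjBy_zg_zt_succ (i + 1)) (zg_temperleyLieb hi hin)

-- By the braid relation the Temperley–Lieb relation is symmetric in `g_j` and `g_{j+1}`.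
lemma zt_sub_mul_sub_mul_zg_succ_add_one_eq_zero {j : ℕ} (hj : 1 ≤ j) (hjn : j + 2 ≤ n) :
    (zt d n j - zt d n (j + 1)) * (zt d n j - zt d n (j + 2)) * (zg d n (j + 1) + 1) = 0 := by
  rw [(commute_zt_sub_zt j (j + 1) j (j + 2)).eq]
  refine sub_mul_sub_mul_add_one_eq_zero (commute_zt _ _) (commute_zt _ _)
    (semiconjBy_zg_zt_self (j + 1)) (commute_zg_zt (by omega) (by omega))
    (semiconjBy_zg_zt_self j) ?_
  rw [← zg_mul_zg_succ_mul_zg, ← zg_temperleyLieb hj hjn]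
  abel

lemma zt_sub_mul_sub_mul_zg_add_one_eq_zero_of_swapIdx {i j m : ℕ} (hm : 1 ≤ m) (hmn : m + 1 ≤ n)
    (him : i + 1 < m ∨ m + 1 < i)
    (hswap : (zt d n (swapIdx m j) - zt d n i) * (zt d n (swapIdx m j) - zt d n (i + 1)) *
      (zg d n i + 1) = 0) :
    (zt d n j - zt d n i) * (zt d n j - zt d n (i + 1)) * (zg d n i + 1) = 0 := by
  have hi : Commute (zg d n m) (zt d n i) := commute_zg_zt (by omega) (by omega)
  have hi' : Commute (zg d n m) (zt d n (i + 1)) := commute_zg_zt (by omega) (by omega)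
  have hg : Commute (zg d n m) (zg d n i + 1) :=
    (commute_zg him.symm).add_right (Commute.one_right _)
  have hj := semiconjBy_zg_zt (d := d) (n := n) m j
  exact eq_zero_of_semiconjBy_of_isLeftRegular (isLeftRegular_zg hm hmn)
    (((hj.sub_right hi).mul_right (hj.sub_right hi')).mul_right hg) hswap

lemma zt_sub_mul_sub_mul_zg_add_one_eq_zero_of_add_two_le {i j : ℕ} (hi : 1 ≤ i) (hij : i + 2 ≤ j)
    (hjn : j ≤ n) :
    (zt d n j - zt d n i) * (zt d n j - zt d n (i + 1)) * (zg d n i + 1) = 0 := by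
  induction j, hij using Nat.le_induction with
  | base => exact zt_add_two_sub_mul_sub_mul_zg_add_one_eq_zero hi hjn
  | succ k hik ih =>
    refine zt_sub_mul_sub_mul_zg_add_one_eq_zero_of_swapIdx (m := k) (by omega) hjn (by omega) ?_
    rw [swapIdx_succ]
    exact ih (by omega)

lemma zt_sub_mul_sub_mul_zg_succ_add_one_eq_zero_of_le {i j : ℕ} (hj : 1 ≤ j) (hji : j ≤ i)
    (hin : i + 2 ≤ n) :
    (zt d n j - zt d n (i + 1)) * (zt d n j - zt d n (i + 2)) * (zg d n (i + 1) + 1) = 0 := by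
  induction hji using Nat.decreasingInduction with
  | self => exact zt_sub_mul_sub_mul_zg_succ_add_one_eq_zero hj hin
  | of_succ k hki ih =>
    refine zt_sub_mul_sub_mul_zg_add_one_eq_zero_of_swapIdx hj (by omega) (by omega) ?_
    rw [swapIdx_self]
    exact ih (by omega)

theorem zt_sub_mul_sub_mul_zg_add_one_eq_zero {i j : ℕ} (hi : 1 ≤ i) (hin : i + 1 ≤ n) (hj : 1 ≤ j)
    (hjn : j ≤ n) :
    (zt d n j - zt d n i) * (zt d n j - zt d n (i + 1)) * (zg d n i + 1) = 0 := by
  obtain hji | rfl | rfl | hij : j + 1 ≤ i ∨ j = i ∨ j = i + 1 ∨ i + 2 ≤ j := by omega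
  · obtain ⟨m, rfl⟩ : ∃ m, i = m + 1 := ⟨i - 1, by omega⟩
    exact zt_sub_mul_sub_mul_zg_succ_add_one_eq_zero_of_le hj (by omega) hin
  · simp
  · simp
  · exact zt_sub_mul_sub_mul_zg_add_one_eq_zero_of_add_two_le hi hij hjn

lemma zt_sub_mul_sub_succ_mul_sub_succ_eq_zero {i j : ℕ} (hi : 1 ≤ i) (hin : i ≤ n) (hj : 1 ≤ j)
    (hjn : j + 1 ≤ n) :
    (zt d n i - zt d n j) * (zt d n i - zt d n (j + 1)) * (zt d n j - zt d n (j + 1)) = 0 := by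
  have hcomm (k : ℕ) :
      Commute ((zt d n i - zt d n j) * (zt d n i - zt d n (j + 1))) (zt d n k) :=
    ((commute_zt i k).sub_left (commute_zt j k)).mul_left
      ((commute_zt i k).sub_left (commute_zt (j + 1) k))
  exact mul_sub_eq_zero_of_mul_add_one_eq_zero (hcomm j) (hcomm (j + 1)) (semiconjBy_zg_zt_self j)
    (zt_sub_mul_sub_mul_zg_add_one_eq_zero hj hjn hi hin)

lemma zt_sub_mul_sub_mul_sub_eq_zero_of_swapIdx {i j k m : ℕ} (hm : 1 ≤ m) (hmn : m + 1 ≤ n)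
    (hswap : (zt d n (swapIdx m i) - zt d n (swapIdx m j)) *
      (zt d n (swapIdx m i) - zt d n (swapIdx m k)) *
      (zt d n (swapIdx m j) - zt d n (swapIdx m k)) = 0) :
    (zt d n i - zt d n j) * (zt d n i - zt d n k) * (zt d n j - zt d n k) = 0 := by
  have hsub (p q : ℕ) : SemiconjBy (zg d n m) (zt d n p - zt d n q)
      (zt d n (swapIdx m p) - zt d n (swapIdx m q)) :=
    (semiconjBy_zg_zt m p).sub_right (semiconjBy_zg_zt m q)
  exact eq_zero_of_semiconjBy_of_isLeftRegular (isLeftRegular_zg hm hmn)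
    (((hsub i j).mul_right (hsub i k)).mul_right (hsub j k)) hswap

lemma zt_sub_mul_sub_mul_sub_eq_zero_of_lt {i j k : ℕ} (hi : i ∈ Set.Icc 1 n) (hj : 1 ≤ j)
    (hjk : j < k) (hkn : k ≤ n) :
    (zt d n i - zt d n j) * (zt d n i - zt d n k) * (zt d n j - zt d n k) = 0 := by
  induction k, Nat.succ_le_of_lt hjk using Nat.le_induction generalizing i with
  | base => exact zt_sub_mul_sub_succ_mul_sub_succ_eq_zero hi.1 hi.2 hj hkn
  | succ k hjk' ih =>
    have hk : 1 ≤ k := by omega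
    refine zt_sub_mul_sub_mul_sub_eq_zero_of_swapIdx hk hkn ?_
    rw [swapIdx_succ, swapIdx_of_ne (i := k) (j := j) (by omega) (by omega)]
    exact ih (swapIdx_mem_Icc hk hkn hi) (by omega) (by omega)

theorem zt_sub_mul_sub_mul_sub_eq_zero {i j k : ℕ} (hi : i ∈ Set.Icc 1 n) (hj : j ∈ Set.Icc 1 n)
    (hk : k ∈ Set.Icc 1 n) :
    (zt d n i - zt d n j) * (zt d n i - zt d n k) * (zt d n j - zt d n k) = 0 := by
  rcases lt_trichotomy j k with hjk | rfl | hkj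
  · exact zt_sub_mul_sub_mul_sub_eq_zero_of_lt hi hj.1 hjk hk.2
  · simp
  · have hswap := zt_sub_mul_sub_mul_sub_eq_zero_of_lt (d := d) hi hk.1 hkj hj.2
    rw [(commute_zt_sub_zt i k i j).eq, mul_sub, sub_eq_zero] at hswap
    rw [mul_sub, sub_eq_zero, hswap]

end Relations

theorem stmt16 (d n : ℕ) (hd : 1 ≤ d) (hn : 3 ≤ n) :
    (∀ i j k, 1 ≤ i → i ≤ n → 1 ≤ j → j ≤ n → 1 ≤ k → k ≤ n →
      (zt d n i - zt d n j) * (zt d n i - zt d n k) * (zt d n j - zt d n k) = 0) ∧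
    (∀ i j, 1 ≤ i → i + 1 ≤ n → 1 ≤ j → j ≤ n →
      (zt d n j - zt d n i) * (zt d n j - zt d n (i + 1)) * (zg d n i + 1) = 0) :=
  ⟨fun _ _ _ hi hin hj hjn hk hkn =>
      zt_sub_mul_sub_mul_sub_eq_zero ⟨hi, hin⟩ ⟨hj, hjn⟩ ⟨hk, hkn⟩,
    fun _ _ hi hin hj hjn => zt_sub_mul_sub_mul_zg_add_one_eq_zero hi hin hj hjn⟩
end
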